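/- Let λ > 0 and q₋ < x₀ < 0 < q₊. The families (C_ε)_{ε>0} and (E_ε)_{ε>0} are asymptotically equivalent as ε → 0⁺, where C_ε = {τ_ε < ∞ and X_ε(τ_ε) = q₊} and E_ε = {there exists t ≥ 0 with X_ε(t) = q₊}. -/

import Mathlib

open MeasureTheory ProbabilityTheory Filter Topology Set

/-- `B` is a standard Brownian motion (for times `t ≥ 0`) on the probability space `(Ω, P)`. -/
def IsBrownianMotion {Ω : Type*} [MeasurableSpace Ω] (P : Measure Ω) (B : ℝ → Ω → ℝ) : Prop :=
  (∀ t : ℝ, Measurable (B t)) ∧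
  (∀ᵐ ω ∂P, B 0 ω = 0 ∧ ContinuousOn (fun t => B t ω) (Set.Ici (0 : ℝ))) ∧
  (∀ s t : ℝ, 0 ≤ s → s ≤ t →
    Measure.map (fun ω => B t ω - B s ω) P = gaussianReal 0 (Real.toNNReal (t - s))) ∧
  (∀ t : ℕ → ℝ, Monotone t → (∀ i, 0 ≤ t i) →
    iIndepFun (fun i ω => B (t (i + 1)) ω - B (t i) ω) P)

/-- Families of events `(A_ε)` and `(B_ε)` are asymptotically equivalent as `ε → 0⁺` if
`P(A_ε) > 0` for all sufficiently small `ε > 0` and `P(A_ε Δ B_ε)/P(A_ε) → 0` as `ε → 0⁺`. -/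
def AsympEquivalent {Ω : Type*} [MeasurableSpace Ω] (P : Measure Ω)
    (A B : ℝ → Set Ω) : Prop :=
  (∀ᶠ ε in 𝓝[>] (0 : ℝ), 0 < P (A ε)) ∧
  Tendsto (fun ε : ℝ => (P (symmDiff (A ε) (B ε))).toReal / (P (A ε)).toReal)
    (𝓝[>] 0) (𝓝 0)

/-!
Since `X_ε(t) = exp (λt) (x₀ + ε B(s))` with `s = clock λ t` increasing to `T = 1 / (2λ)`, being at
`q` at time `t` means `B(s) = -x₀ / ε + (q / ε) √(2λ) √(T - s)`. A path that hits `q₊` without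
exiting there has been at `q₋` before, so that `B` is first below the curve
`u ↦ a - c √(T - u)` and then above the level `a`, where `a = -x₀ / ε`, `c = (q / ε) √(2λ)` and
`q < -q₋`. By the reflection principle this is at most twice as likely as being below the curve
and then above `a` at time `T`, which takes an increment of more than `c` standard deviations:
the probability is at most `2 exp (-c² / 2) = 2 exp (-λ (q / ε)²)`.

On the other hand, `q₊` is hit as soon as `B(T) > a`. For `max (-x₀) 0 = p < q`, the Gaussian
density of `B(T)` on `(p / ε, q / ε)` is at least its value at `q / ε`, so this has probability at
least `√(λ / π) exp (-λ (q / ε)²) (q - p) / ε`. The exponentials cancel, and the ratio is `O(ε)`.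
-/

open scoped NNReal ENNReal Real

section FirstPassage

variable {Ω : Type*} {mΩ : MeasurableSpace Ω} {P : Measure Ω} {F : Filtration ℕ mΩ}
  {A D : ℕ → Set Ω} {p : ℝ≥0∞}

lemma measurableSet_disjointed_of_filtration (hA : ∀ k, MeasurableSet[F k] (A k)) (k : ℕ) :
    MeasurableSet[F k] (disjointed A k) := by
  rw [disjointed_eq_inter_compl]
  exact (hA k).inter (.iInter fun j => .iInter fun hj => (F.mono hj.le _ (hA j)).compl)

lemma tsum_measure_disjointed (hA : ∀ k, MeasurableSet (A k)) :
    ∑' k, P (disjointed A k) = P (⋃ k, A k) := by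
  rw [← iUnion_disjointed, measure_iUnion (disjoint_disjointed A) fun k => .disjointed hA k]

-- `disjointed A k` is the event that `k` is the first index at which `A` occurs.
lemma measure_iUnion_disjointed_inter (hA : ∀ k, MeasurableSet[F k] (A k))
    (hD : ∀ k, MeasurableSet (D k)) (hAD : ∀ k S, MeasurableSet[F k] S → IndepSet S (D k) P) :
    P (⋃ k, disjointed A k ∩ D k) = ∑' k, P (disjointed A k) * P (D k) := by
  have hA' := measurableSet_disjointed_of_filtration hA
  rw [measure_iUnion
    (fun i j hij => (disjoint_disjointed A hij).mono inter_subset_left inter_subset_left)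
    fun k => (F.le k _ (hA' k)).inter (hD k)]
  exact tsum_congr fun k => (hAD k _ (hA' k)).measure_inter_eq_mul

lemma measure_iUnion_disjointed_inter_le (hA : ∀ k, MeasurableSet[F k] (A k))
    (hD : ∀ k, MeasurableSet (D k)) (hAD : ∀ k S, MeasurableSet[F k] S → IndepSet S (D k) P)
    (hp : ∀ k, P (D k) ≤ p) :
    P (⋃ k, disjointed A k ∩ D k) ≤ P (⋃ k, A k) * p := by
  rw [measure_iUnion_disjointed_inter hA hD hAD,
    ← tsum_measure_disjointed fun k => F.le k _ (hA k), ← ENNReal.tsum_mul_right]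
  gcongr with k
  exact hp k

lemma mul_le_measure_iUnion_disjointed_inter (hA : ∀ k, MeasurableSet[F k] (A k))
    (hD : ∀ k, MeasurableSet (D k)) (hAD : ∀ k S, MeasurableSet[F k] S → IndepSet S (D k) P)
    (hp : ∀ k, p ≤ P (D k)) :
    P (⋃ k, A k) * p ≤ P (⋃ k, disjointed A k ∩ D k) := by
  rw [measure_iUnion_disjointed_inter hA hD hAD,
    ← tsum_measure_disjointed fun k => F.le k _ (hA k), ← ENNReal.tsum_mul_right]
  gcongr with k
  exact hp k

end FirstPassage

lemma measure_le_of_ae_eventually_mem {α : Type*} {mα : MeasurableSpace α} {μ : Measure α}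
    {s : Set α} {A : ℕ → Set α} {c : ℝ≥0∞} (hs : ∀ᵐ x ∂μ, x ∈ s → ∀ᶠ n in atTop, x ∈ A n)
    (hA : ∀ n, μ (A n) ≤ c) : μ s ≤ c := by
  have hs' : s ≤ᵐ[μ] ⋃ m, ⋂ n ≥ m, A n := by
    filter_upwards [hs] with x hx hxs
    obtain ⟨m, hm⟩ := eventually_atTop.1 (hx hxs)
    exact mem_iUnion.2 ⟨m, mem_iInter₂.2 hm⟩
  refine (measure_mono_ae hs').trans ?_
  rw [Monotone.measure_iUnion fun m m' hm => biInter_subset_biInter_left fun n => le_trans hm]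
  exact iSup_le fun m => (measure_mono (iInter₂_subset m le_rfl)).trans (hA m)

section Gaussian

variable (m : ℝ) (v : ℝ≥0)

lemma inv_two_le_gaussianReal_Ici : 2⁻¹ ≤ gaussianReal m v (Ici m) := by
  have hsymm : gaussianReal m v (Iic m) = gaussianReal m v (Ici m) := by
    have hreflect : (gaussianReal m v).map (2 * m - ·) = gaussianReal m v := by
      rw [gaussianReal_map_const_sub]; congr 1; ring
    conv_lhs => rw [← hreflect, Measure.map_apply (by fun_prop) measurableSet_Iic]
    congr 1
    ext x
    simp only [mem_preimage, mem_Iic, mem_Ici]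
    constructor <;> intro h <;> linarith
  rw [ENNReal.inv_le_iff_le_mul (by simp) (by simp)]
  calc 1 = gaussianReal m v (Iic m ∪ Ici m) := by simp
    _ ≤ gaussianReal m v (Iic m) + gaussianReal m v (Ici m) := measure_union_le _ _
    _ = 2 * gaussianReal m v (Ici m) := by rw [hsymm, two_mul]

lemma hasSubgaussianMGF_sub_gaussianReal :
    HasSubgaussianMGF (· - m) v (gaussianReal m v) := by
  have hid : HasSubgaussianMGF id v ((gaussianReal m v).map (· - m)) := by
    rw [gaussianReal_map_sub_const, sub_self]
    exact ⟨integrable_exp_mul_gaussianReal, fun t => by simp [mgf_id_gaussianReal]⟩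
  exact hid.of_map (by fun_prop)

lemma gaussianReal_Ioi_add_mul_sqrt_le {r : ℝ} (hr : 0 ≤ r) :
    gaussianReal m v (Ioi (m + r * √v)) ≤ ENNReal.ofReal (Real.exp (-(r ^ 2 / 2))) := by
  rcases eq_or_ne v 0 with rfl | hv
  · simp [gaussianReal_zero_var]
  have hv' : (0 : ℝ) < v := by positivity
  rw [← ofReal_measureReal]
  gcongr
  calc (gaussianReal m v).real (Ioi (m + r * √v))
      ≤ (gaussianReal m v).real {x | r * √v ≤ x - m} :=
        measureReal_mono fun x (hx : m + r * √v < x) => (lt_sub_iff_add_lt'.2 hx).le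
    _ ≤ Real.exp (-(r * √v) ^ 2 / (2 * v)) :=
        (hasSubgaussianMGF_sub_gaussianReal m v).measure_ge_le (by positivity)
    _ = Real.exp (-(r ^ 2 / 2)) := by
        rw [mul_pow, Real.sq_sqrt hv'.le]
        field_simp

lemma antitoneOn_gaussianPDFReal : AntitoneOn (gaussianPDFReal m v) (Ici m) := by
  intro x hx y _ hxy
  have : 0 ≤ x - m := sub_nonneg.2 hx
  unfold gaussianPDFReal
  gcongr

variable {m} in
lemma gaussianPDFReal_mul_sub_le_measureReal_Ioo {a b : ℝ} (ha : m ≤ a) (hab : a ≤ b) :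
    gaussianPDFReal m v b * (b - a) ≤ (gaussianReal m v).real (Ioo a b) := by
  rcases eq_or_ne v 0 with rfl | hv
  · simp
  have hint := (integrable_gaussianPDFReal m v).integrableOn (s := Ioo a b)
  rw [measureReal_def, gaussianReal_apply_eq_integral m hv,
    ENNReal.toReal_ofReal (integral_nonneg fun x => gaussianPDFReal_nonneg m v x)]
  calc gaussianPDFReal m v b * (b - a) = ∫ _ in Ioo a b, gaussianPDFReal m v b := by
        simp [hab, mul_comm]
    _ ≤ ∫ x in Ioo a b, gaussianPDFReal m v x :=
        setIntegral_mono_on (by simp) hint measurableSet_Ioo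
          fun x hx => antitoneOn_gaussianPDFReal m v (ha.trans hx.1.le)
            (ha.trans (hx.1.trans hx.2).le) hx.2.le

lemma gaussianPDFReal_zero_one_div_two_mul {lam : ℝ} (hlam : 0 < lam) (x : ℝ) :
    gaussianPDFReal 0 (1 / (2 * lam)).toNNReal x = √(lam / π) * Real.exp (-(lam * x ^ 2)) := by
  have hcoe : ((1 / (2 * lam)).toNNReal : ℝ) = 1 / (2 * lam) :=
    Real.coe_toNNReal _ (by positivity)
  rw [gaussianPDFReal, hcoe, ← Real.sqrt_inv]
  congr 2 <;> field_simp
  rw [sub_zero]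

end Gaussian

section Brownian

variable {Ω : Type*} {mΩ : MeasurableSpace Ω} {P : Measure Ω} {W : ℝ≥0 → Ω → ℝ} {T : ℝ≥0}
  {t : ℕ → ℝ≥0}

lemma measure_sub_preimage_eq_gaussianReal (hW : IsPreBrownianReal W P) {s t : ℝ≥0} (hst : s ≤ t)
    {U : Set ℝ} (hU : MeasurableSet U) : P ((W t - W s) ⁻¹' U) = gaussianReal 0 (t - s) U := by
  have hlaw := (hW.shift s).hasLaw_eval (t - s)
  rw [add_tsub_cancel_of_le hst] at hlaw
  rw [← hlaw.map_eq]
  exact (Measure.map_apply_of_aemeasurable hlaw.aemeasurable hU).symm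

/-- The natural filtration of `W` sampled at the times `t 0, t 1, …`. -/
noncomputable def sampledFiltration (hm : ∀ s, Measurable (W s)) (t : ℕ → ℝ≥0) :
    Filtration ℕ mΩ :=
  Filtration.natural (fun k => W (t k)) fun k => (hm (t k)).stronglyMeasurable

lemma measurable_sampledFiltration (hm : ∀ s, Measurable (W s)) (t : ℕ → ℝ≥0) (k : ℕ) :
    Measurable[sampledFiltration hm t k] (W (t k)) :=
  (Filtration.stronglyAdapted_natural (fun k => (hm (t k)).stronglyMeasurable) k).measurable

lemma indep_sampledFiltration_comap_sub (hW : IsPreBrownianReal W P)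
    (hm : ∀ s, Measurable (W s)) (ht : Monotone t) {k : ℕ} (hT : t k ≤ T) :
    Indep (sampledFiltration hm t k) (MeasurableSpace.comap (W T - W (t k)) inferInstance) P := by
  have hind := (hW.indepFun_shift (t k)).symm.comp
    (φ := fun w (j : Iic k) => w ⟨t j, ht j.2⟩) (by fun_prop)
    (measurable_pi_apply (X := fun _ : ℝ≥0 => ℝ) (T - t k))
  rw [sampledFiltration, Filtration.natural_eq_comap]
  simpa [IndepFun_iff_Indep, Function.comp_def, add_tsub_cancel_of_le hT] using! hind

lemma indepSet_sub_preimage (hW : IsPreBrownianReal W P) (hm : ∀ s, Measurable (W s))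
    (ht : Monotone t) {k : ℕ} (hT : t k ≤ T) {S : Set Ω}
    (hS : MeasurableSet[sampledFiltration hm t k] S) {U : Set ℝ} (hU : MeasurableSet U) :
    IndepSet S ((W T - W (t k)) ⁻¹' U) P :=
  (indep_sampledFiltration_comap_sub hW hm ht hT).indepSet_of_measurableSet hS ⟨U, hU, rfl⟩

-- Reflection principle: from the first `t k` at which `S k` occurs and `W > a`, the increment of
-- `W` up to time `T` is nonnegative with probability at least `1 / 2`.
lemma measure_iUnion_inter_lt_le_two_mul (hW : IsPreBrownianReal W P)
    (hm : ∀ s, Measurable (W s)) (ht : Monotone t) (hT : ∀ k, t k ≤ T) {S : ℕ → Set Ω}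
    (hS : ∀ k, MeasurableSet[sampledFiltration hm t k] (S k)) (a : ℝ) :
    P (⋃ k, S k ∩ {ω | a < W (t k) ω}) ≤ 2 * P ((⋃ k, S k) ∩ {ω | a < W T ω}) := by
  set A : ℕ → Set Ω := fun k => S k ∩ {ω | a < W (t k) ω}
  have hA k : MeasurableSet[sampledFiltration hm t k] (A k) :=
    (hS k).inter (measurable_sampledFiltration hm t k measurableSet_Ioi)
  calc P (⋃ k, A k) = 2 * (P (⋃ k, A k) * 2⁻¹) := by
        rw [mul_left_comm, ENNReal.mul_inv_cancel two_ne_zero ENNReal.ofNat_ne_top, mul_one]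
    _ ≤ 2 * P (⋃ k, disjointed A k ∩ (W T - W (t k)) ⁻¹' Ici 0) := by
        gcongr
        refine mul_le_measure_iUnion_disjointed_inter hA
          (fun k => (hm T).sub (hm (t k)) measurableSet_Ici)
          (fun k S hS => indepSet_sub_preimage hW hm ht (hT k) hS measurableSet_Ici) fun k => ?_
        rw [measure_sub_preimage_eq_gaussianReal hW (hT k) measurableSet_Ici]
        exact inv_two_le_gaussianReal_Ici 0 _
    _ ≤ 2 * P ((⋃ k, S k) ∩ {ω | a < W T ω}) := by
        gcongr
        refine iUnion_subset fun k ω ⟨hω, hincr⟩ => ?_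
        obtain ⟨hωS, hωa⟩ := disjointed_subset A k hω
        exact ⟨mem_iUnion.2 ⟨k, hωS⟩, mem_ofPred.2 (hωa.trans_le (sub_nonneg.1 hincr))⟩

/-- The curve from which a Brownian motion reaches the level `a` at time `T` by an increment of `c`
standard deviations. -/
noncomputable def sqrtBarrier (a c T u : ℝ) : ℝ := a - c * √(T - u)

lemma continuous_sqrtBarrier (a c T : ℝ) : Continuous (sqrtBarrier a c T) := by
  unfold sqrtBarrier
  fun_prop

lemma measure_iUnion_lt_sqrtBarrier_inter_lt_le (hW : IsPreBrownianReal W P)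
    (hm : ∀ s, Measurable (W s)) (ht : Monotone t) (hT : ∀ k, t k ≤ T) (a : ℝ) {c : ℝ}
    (hc : 0 ≤ c) :
    P ((⋃ k, {ω | W (t k) ω < sqrtBarrier a c T (t k)}) ∩ {ω | a < W T ω})
      ≤ ENNReal.ofReal (Real.exp (-(c ^ 2 / 2))) := by
  have := hW.isGaussianProcess.isProbabilityMeasure
  set A : ℕ → Set Ω := fun k => {ω | W (t k) ω < sqrtBarrier a c T (t k)}
  have hA k : MeasurableSet[sampledFiltration hm t k] (A k) :=
    measurable_sampledFiltration hm t k measurableSet_Iio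
  calc P ((⋃ k, A k) ∩ {ω | a < W T ω})
      ≤ P (⋃ k, disjointed A k ∩ (W T - W (t k)) ⁻¹' Ioi (c * √(T - t k))) := by
        rw [← iUnion_disjointed, iUnion_inter]
        refine measure_mono (iUnion_mono fun k ω ⟨hωA, hωT⟩ => ⟨hωA, ?_⟩)
        have hωk : W (t k) ω < a - c * √(T - t k) := disjointed_subset A k hωA
        simp only [mem_ofPred_eq, mem_preimage, Pi.sub_apply, mem_Ioi] at hωT ⊢
        linarith
    _ ≤ P (⋃ k, A k) * ENNReal.ofReal (Real.exp (-(c ^ 2 / 2))) := by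
        refine measure_iUnion_disjointed_inter_le hA
          (fun k => (hm T).sub (hm (t k)) measurableSet_Ioi)
          (fun k S hS => indepSet_sub_preimage hW hm ht (hT k) hS measurableSet_Ioi) fun k => ?_
        rw [measure_sub_preimage_eq_gaussianReal hW (hT k) measurableSet_Ioi]
        simpa [NNReal.coe_sub (hT k)] using gaussianReal_Ioi_add_mul_sqrt_le 0 (T - t k) hc
    _ ≤ ENNReal.ofReal (Real.exp (-(c ^ 2 / 2))) := mul_le_of_le_one_left' prob_le_one

lemma measure_sampled_crossing_sqrtBarrier_le (hW : IsPreBrownianReal W P)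
    (hm : ∀ s, Measurable (W s)) (ht : Monotone t) (hT : ∀ k, t k ≤ T) (a : ℝ) {c : ℝ}
    (hc : 0 ≤ c) :
    P {ω | ∃ i j, i ≤ j ∧ W (t i) ω < sqrtBarrier a c T (t i) ∧ a < W (t j) ω}
      ≤ 2 * ENNReal.ofReal (Real.exp (-(c ^ 2 / 2))) := by
  set low : ℕ → Set Ω := fun k => {ω | W (t k) ω < sqrtBarrier a c T (t k)}
  have hlow k : MeasurableSet[sampledFiltration hm t k] (accumulate low k) :=
    .biUnion (to_countable _) fun i hi => (sampledFiltration hm t).mono hi _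
      (measurable_sampledFiltration hm t i measurableSet_Iio)
  calc P {ω | ∃ i j, i ≤ j ∧ W (t i) ω < sqrtBarrier a c T (t i) ∧ a < W (t j) ω}
      ≤ P (⋃ k, accumulate low k ∩ {ω | a < W (t k) ω}) :=
        measure_mono fun ω ⟨i, j, hij, hi, hj⟩ =>
          mem_iUnion.2 ⟨j, mem_accumulate.2 ⟨i, hij, hi⟩, hj⟩
    _ ≤ 2 * P ((⋃ k, accumulate low k) ∩ {ω | a < W T ω}) :=
        measure_iUnion_inter_lt_le_two_mul hW hm ht hT hlow a
    _ ≤ 2 * ENNReal.ofReal (Real.exp (-(c ^ 2 / 2))) := by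
        rw [iUnion_accumulate]
        gcongr
        exact measure_iUnion_lt_sqrtBarrier_inter_lt_le hW hm ht hT a hc

/-- The times `0, 1 / n, 2 / n, …`, truncated at `T` (all of them are `0` for `n = 0`). -/
noncomputable def uniformGrid (T : ℝ≥0) (n k : ℕ) : ℝ≥0 := min (k / n) T

lemma monotone_uniformGrid (T : ℝ≥0) (n : ℕ) : Monotone (uniformGrid T n) := fun i j hij => by
  unfold uniformGrid
  gcongr

lemma tendsto_uniformGrid_floor {s : ℝ≥0} (hs : s ≤ T) :
    Tendsto (fun n : ℕ => uniformGrid T n ⌊(s : ℝ) * n⌋₊) atTop (𝓝 s) := by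
  have hfloor := ((tendsto_nat_floor_mul_div_atTop s.coe_nonneg).comp
    (tendsto_natCast_atTop_atTop (R := ℝ))).min (tendsto_const_nhds (x := (T : ℝ)))
  rw [min_eq_left (NNReal.coe_le_coe.2 hs)] at hfloor
  rw [← NNReal.tendsto_coe]
  refine hfloor.congr fun n => ?_
  simp [uniformGrid]

lemma measure_crossing_sqrtBarrier_le (hW : IsBrownianReal W P) (hm : ∀ s, Measurable (W s))
    (T : ℝ≥0) (a : ℝ) {c : ℝ} (hc : 0 ≤ c) :
    P {ω | ∃ u v, u ≤ v ∧ v ≤ T ∧ W u ω < sqrtBarrier a c T u ∧ a < W v ω}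
      ≤ 2 * ENNReal.ofReal (Real.exp (-(c ^ 2 / 2))) := by
  refine measure_le_of_ae_eventually_mem ?_ fun n =>
    measure_sampled_crossing_sqrtBarrier_le hW.toIsPreBrownianReal hm (monotone_uniformGrid T n)
      (fun _ => min_le_right _ _) a hc
  filter_upwards [hW.cont] with ω hω
  rintro ⟨u, v, huv, hvT, hu, hv⟩
  have hlow : ∀ᶠ s in 𝓝 u, W s ω < sqrtBarrier a c T s :=
    hω.continuousAt.eventually_lt
      ((continuous_sqrtBarrier a c T).comp NNReal.continuous_coe).continuousAt hu
  have hhigh : ∀ᶠ s in 𝓝 v, a < W s ω := hω.continuousAt.eventually_const_lt hv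
  filter_upwards [(tendsto_uniformGrid_floor (huv.trans hvT)).eventually hlow,
    (tendsto_uniformGrid_floor hvT).eventually hhigh] with n hun hvn
  exact ⟨_, _, Nat.floor_mono (by gcongr), hun, hvn⟩

end Brownian

namespace IsBrownianMotion

variable {Ω : Type*} [MeasurableSpace Ω] {P : Measure Ω} {B : ℝ → Ω → ℝ}

lemma hasLaw (hB : IsBrownianMotion P B) {t : ℝ} (ht : 0 ≤ t) :
    HasLaw (B t) (gaussianReal 0 t.toNNReal) P where
  aemeasurable := (hB.1 t).aemeasurable
  map_eq := by
    have hincr := hB.2.2.1 0 t le_rfl ht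
    rw [sub_zero] at hincr
    rw [← hincr]
    refine Measure.map_congr ?_
    filter_upwards [hB.2.1] with ω hω
    rw [hω.1, sub_zero]

lemma isBrownianReal (hB : IsBrownianMotion P B) :
    IsBrownianReal (fun (t : ℝ≥0) => B t) P where
  toIsPreBrownianReal := by
    refine HasIndepIncrements.isPreBrownianReal_of_hasLaw (fun t => ?_)
      (hasIndepIncrements_iff_nat.2 fun t ht => ?_)
    · simpa using hB.hasLaw t.coe_nonneg
    · exact hB.2.2.2 (fun i => t i) (fun i j hij => ht hij) fun i => (t i).coe_nonneg
  cont := by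
    filter_upwards [hB.2.1] with ω hω
    exact hω.2.comp_continuous NNReal.continuous_coe fun t => t.coe_nonneg

lemma isProbabilityMeasure (hB : IsBrownianMotion P B) : IsProbabilityMeasure P :=
  hB.isBrownianReal.isGaussianProcess.isProbabilityMeasure

lemma measureReal_crossing_sqrtBarrier_le (hB : IsBrownianMotion P B) {T : ℝ} (hT : 0 ≤ T)
    (a : ℝ) {c : ℝ} (hc : 0 ≤ c) :
    P.real {ω | ∃ u v, 0 ≤ u ∧ u ≤ v ∧ v ≤ T ∧ B u ω < sqrtBarrier a c T u ∧ a < B v ω}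
      ≤ 2 * Real.exp (-(c ^ 2 / 2)) := by
  refine ENNReal.toReal_le_of_le_ofReal (by positivity) ?_
  rw [ENNReal.ofReal_mul zero_le_two, ENNReal.ofReal_ofNat]
  refine (measure_mono ?_).trans
    (measure_crossing_sqrtBarrier_le hB.isBrownianReal (fun s => hB.1 s) ⟨T, hT⟩ a hc)
  rintro ω ⟨u, v, hu, huv, hvT, hlow, hhigh⟩
  exact ⟨⟨u, hu⟩, ⟨v, hu.trans huv⟩, huv, hvT, hlow, hhigh⟩

end IsBrownianMotion

section Path

/-- The intrinsic clock `t ↦ (1 - exp (-2λt)) / (2λ)` of the stochastic integral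
`∫₀ᵗ exp (-λs) dW(s)`. -/
noncomputable def clock (lam t : ℝ) : ℝ := (1 - Real.exp (-(2 * lam * t))) / (2 * lam)

/-- The path started at `x₀` of the unstable Ornstein–Uhlenbeck equation `dX = λ X dt + ε dW`, with
`∫₀ᵗ exp (-λs) dW(s)` given by the path `w` run along `clock lam`. -/
noncomputable def ouPath (lam x₀ ε : ℝ) (w : ℝ → ℝ) (t : ℝ) : ℝ :=
  Real.exp (lam * t) * (x₀ + ε * w (clock lam t))

/-- The times at which the path `x` is at an endpoint of `(qm, qp)`; its infimum is the exit time
of `x`, provided that it is nonempty. -/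
def exitTimes (qm qp : ℝ) (x : ℝ → ℝ) : Set ℝ := {t | 0 ≤ t ∧ (x t = qm ∨ x t = qp)}

/-- The path `x` leaves `(qm, qp)` in finite time, and does so at `qp`. -/
def ExitsAtRight (qm qp : ℝ) (x : ℝ → ℝ) : Prop :=
  (exitTimes qm qp x).Nonempty ∧ x (sInf (exitTimes qm qp x)) = qp

/-- The path `x` is at `q` at some nonnegative time. -/
def Hits (q : ℝ) (x : ℝ → ℝ) : Prop := ∃ t, 0 ≤ t ∧ x t = q

lemma ExitsAtRight.hits {qm qp : ℝ} {x : ℝ → ℝ} (h : ExitsAtRight qm qp x) : Hits qp x :=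
  ⟨_, Real.sInf_nonneg fun _ ht => ht.1, h.2⟩

lemma exists_le_eq_of_hits_of_not_exitsAtRight {qm qp : ℝ} {x : ℝ → ℝ} (hx : ContinuousOn x (Ici 0))
    (hhit : Hits qp x) (hexit : ¬ ExitsAtRight qm qp x) :
    ∃ s t, 0 ≤ s ∧ s ≤ t ∧ x s = qm ∧ x t = qp := by
  obtain ⟨t, ht, htq⟩ := hhit
  have hclosed : IsClosed (exitTimes qm qp x) :=
    hx.preimage_isClosed_of_isClosed isClosed_Ici (toFinite {qm, qp}).isClosed
  have hbdd : BddBelow (exitTimes qm qp x) := ⟨0, fun _ hs => hs.1⟩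
  have htmem : t ∈ exitTimes qm qp x := ⟨ht, Or.inr htq⟩
  obtain ⟨hnonneg, hq⟩ := hclosed.csInf_mem ⟨t, htmem⟩ hbdd
  exact ⟨_, t, hnonneg, csInf_le hbdd htmem, hq.resolve_right fun h => hexit ⟨⟨t, htmem⟩, h⟩, htq⟩

lemma continuous_clock (lam : ℝ) : Continuous (clock lam) := by
  unfold clock
  fun_prop

variable {lam : ℝ}

lemma clock_strictMono (hlam : 0 < lam) : StrictMono (clock lam) := by
  intro s t hst
  unfold clock
  gcongr

lemma clock_zero : clock lam 0 = 0 := by simp [clock]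

lemma clock_nonneg (hlam : 0 < lam) {t : ℝ} (ht : 0 ≤ t) : 0 ≤ clock lam t :=
  clock_zero.symm.trans_le ((clock_strictMono hlam).monotone ht)

lemma clock_le (hlam : 0 < lam) (t : ℝ) : clock lam t ≤ 1 / (2 * lam) := by
  unfold clock
  gcongr
  exact sub_le_self 1 (Real.exp_pos _).le

lemma sqrt_mul_sqrt_sub_clock (hlam : 0 < lam) (t : ℝ) :
    √(2 * lam) * √(1 / (2 * lam) - clock lam t) = Real.exp (-(lam * t)) := by
  have hexp : 2 * lam * (1 / (2 * lam) - clock lam t) = Real.exp (-(lam * t)) ^ 2 := by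
    rw [← Real.exp_nat_mul, clock]
    field_simp
    ring_nf
  rw [← Real.sqrt_mul (by positivity), hexp, Real.sqrt_sq (Real.exp_pos _).le]

lemma tendsto_clock (hlam : 0 < lam) : Tendsto (clock lam) atTop (𝓝 (1 / (2 * lam))) := by
  have hexp : Tendsto (fun t => Real.exp (-(2 * lam * t))) atTop (𝓝 0) :=
    Real.tendsto_exp_neg_atTop_nhds_zero.comp (tendsto_id.const_mul_atTop (by positivity))
  have hlim := (hexp.const_sub 1).div_const (2 * lam)
  rwa [sub_zero] at hlim

variable {x₀ ε : ℝ} {w : ℝ → ℝ}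

lemma continuousOn_ouPath (hlam : 0 < lam) (hw : ContinuousOn w (Ici 0)) :
    ContinuousOn (ouPath lam x₀ ε w) (Ici 0) := by
  have hcomp : ContinuousOn (fun t => w (clock lam t)) (Ici 0) :=
    hw.comp (continuous_clock lam).continuousOn fun t ht => clock_nonneg hlam ht
  exact (Continuous.continuousOn (by fun_prop)).mul
    (continuousOn_const.add (continuousOn_const.mul hcomp))

lemma ouPath_eq_iff (hε : ε ≠ 0) {t q : ℝ} :
    ouPath lam x₀ ε w t = q ↔ w (clock lam t) = -x₀ / ε + q / ε * Real.exp (-(lam * t)) := by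
  rw [ouPath, Real.exp_neg]
  constructor <;> intro h
  · rw [← h]
    field_simp
    ring
  · rw [h]
    field_simp
    ring

lemma tendsto_ouPath_atTop (hlam : 0 < lam) (hw : ContinuousOn w (Ici 0))
    (hpos : 0 < x₀ + ε * w (1 / (2 * lam))) : Tendsto (ouPath lam x₀ ε w) atTop atTop := by
  have hclock : Tendsto (clock lam) atTop (𝓝[Ici 0] (1 / (2 * lam))) :=
    tendsto_nhdsWithin_iff.2
      ⟨tendsto_clock hlam, (eventually_ge_atTop 0).mono fun _ ht => clock_nonneg hlam ht⟩
  have hlim : Tendsto (fun t => w (clock lam t)) atTop (𝓝 (w (1 / (2 * lam)))) :=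
    (hw (1 / (2 * lam)) (mem_Ici.2 (by positivity))).tendsto.comp hclock
  exact (Real.tendsto_exp_atTop.comp (tendsto_id.const_mul_atTop hlam)).atTop_mul_pos hpos
    ((hlim.const_mul ε).const_add x₀)

lemma hits_ouPath (hlam : 0 < lam) (hw : ContinuousOn w (Ici 0)) (hw0 : w 0 = 0) {q : ℝ}
    (hq : x₀ ≤ q) (hpos : 0 < x₀ + ε * w (1 / (2 * lam))) : Hits q (ouPath lam x₀ ε w) := by
  obtain ⟨t, htq, ht⟩ := (((tendsto_ouPath_atTop hlam hw hpos).eventually_ge_atTop q).and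
    (eventually_ge_atTop 0)).exists
  have hstart : ouPath lam x₀ ε w 0 = x₀ := by simp [ouPath, clock_zero, hw0]
  obtain ⟨s, hs, hsq⟩ := intermediate_value_Icc ht
    ((continuousOn_ouPath hlam hw).mono Icc_subset_Ici_self) ⟨hstart.trans_le hq, htq⟩
  exact ⟨s, hs.1, hsq⟩

lemma exists_crossing_of_hits_of_not_exitsAtRight (hlam : 0 < lam) (hε : 0 < ε)
    (hw : ContinuousOn w (Ici 0)) {q qm qp : ℝ} (hq : q < -qm) (hqp : 0 < qp)
    (hhit : Hits qp (ouPath lam x₀ ε w)) (hexit : ¬ ExitsAtRight qm qp (ouPath lam x₀ ε w)) :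
    ∃ u v, 0 ≤ u ∧ u ≤ v ∧ v ≤ 1 / (2 * lam) ∧
      w u < sqrtBarrier (-x₀ / ε) (q / ε * √(2 * lam)) (1 / (2 * lam)) u ∧ -x₀ / ε < w v := by
  obtain ⟨s, t, hs, hst, hsq, htq⟩ :=
    exists_le_eq_of_hits_of_not_exitsAtRight (continuousOn_ouPath hlam hw) hhit hexit
  rw [ouPath_eq_iff hε.ne'] at hsq htq
  refine ⟨clock lam s, clock lam t, clock_nonneg hlam hs, (clock_strictMono hlam).monotone hst,
    clock_le hlam t, ?_, ?_⟩
  · rw [sqrtBarrier, mul_assoc, sqrt_mul_sqrt_sub_clock hlam, hsq, sub_eq_add_neg,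
      ← neg_mul (q / ε), ← neg_div ε q]
    gcongr
    exact lt_neg_of_lt_neg hq
  · rw [htq]
    exact lt_add_of_pos_right _ (by positivity)

end Path

section Asymptotics

variable {Ω : Type*} [MeasurableSpace Ω] {P : Measure Ω} {A B : ℝ → Set Ω}

lemma asympEquivalent_of_measureReal_symmDiff_le {g : ℝ → ℝ}
    (hA : ∀ᶠ ε in 𝓝[>] (0 : ℝ), 0 < P.real (A ε)) (hg : Tendsto g (𝓝[>] 0) (𝓝 0))
    (hle : ∀ᶠ ε in 𝓝[>] (0 : ℝ), P.real (symmDiff (A ε) (B ε)) ≤ g ε * P.real (A ε)) :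
    AsympEquivalent P A B := by
  refine ⟨hA.mono fun ε h => (ENNReal.toReal_pos_iff.1 h).1,
    squeeze_zero' (Eventually.of_forall fun ε => by positivity) ?_ hg⟩
  filter_upwards [hA, hle] with ε hAε hleε
  exact (div_le_iff₀ hAε).2 hleε

lemma AsympEquivalent.symm [IsFiniteMeasure P] (h : AsympEquivalent P A B) :
    AsympEquivalent P B A := by
  have hratio : ∀ᶠ ε in 𝓝[>] (0 : ℝ), 0 < P.real (A ε) ∧ P.real (A ε) ≤ 2 * P.real (B ε) := by
    filter_upwards [h.1, h.2.eventually_lt_const one_half_pos] with ε hA hhalf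
    have hA : 0 < P.real (A ε) := ENNReal.toReal_pos hA.ne' (measure_ne_top _ _)
    have hsymm : P.real (symmDiff (A ε) (B ε)) < 1 / 2 * P.real (A ε) := (div_lt_iff₀ hA).1 hhalf
    have hunion : P.real (A ε) ≤ P.real (B ε) + P.real (symmDiff (A ε) (B ε)) :=
      (measureReal_mono fun ω hω => by by_cases hωB : ω ∈ B ε <;> simp [mem_symmDiff, *]).trans
        (measureReal_union_le _ _)
    exact ⟨hA, by linarith⟩
  have hlim := h.2.const_mul 2
  rw [mul_zero] at hlim
  refine asympEquivalent_of_measureReal_symmDiff_le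
    (hratio.mono fun ε hε => by linarith) hlim (hratio.mono fun ε ⟨hA, hAB⟩ => ?_)
  rw [symmDiff_comm]
  calc P.real (symmDiff (A ε) (B ε))
      = P.real (symmDiff (A ε) (B ε)) / P.real (A ε) * P.real (A ε) := by field_simp
    _ ≤ P.real (symmDiff (A ε) (B ε)) / P.real (A ε) * (2 * P.real (B ε)) := by gcongr
    _ = 2 * (P.real (symmDiff (A ε) (B ε)) / P.real (A ε)) * P.real (B ε) := by ring

end Asymptotics

section Probability

variable {Ω : Type*} [MeasurableSpace Ω] {P : Measure Ω} {B : ℝ → Ω → ℝ}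
  {lam x₀ ε q qm qp : ℝ}

lemma measureReal_hits_sdiff_exitsAtRight_le (hB : IsBrownianMotion P B) (hlam : 0 < lam)
    (hε : 0 < ε) (hq : 0 ≤ q) (hqm : q < -qm) (hqp : 0 < qp) :
    P.real ({ω | Hits qp (ouPath lam x₀ ε (B · ω))} \
        {ω | ExitsAtRight qm qp (ouPath lam x₀ ε (B · ω))})
      ≤ 2 * Real.exp (-(lam * (q / ε) ^ 2)) := by
  have := hB.isProbabilityMeasure
  have hc : (q / ε * √(2 * lam)) ^ 2 / 2 = lam * (q / ε) ^ 2 := by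
    rw [mul_pow, Real.sq_sqrt (by positivity)]
    ring
  rw [← hc]
  refine le_trans (ENNReal.toReal_mono (measure_ne_top _ _) (measure_mono_ae ?_))
    (hB.measureReal_crossing_sqrtBarrier_le (T := 1 / (2 * lam)) (by positivity) (-x₀ / ε)
      (by positivity))
  filter_upwards [hB.2.1] with ω hω hdiff
  exact exists_crossing_of_hits_of_not_exitsAtRight hlam hε hω.2 hqm hqp hdiff.1 hdiff.2

lemma le_measureReal_hits (hB : IsBrownianMotion P B) (hlam : 0 < lam) (hε : 0 < ε) {p : ℝ}
    (hp : 0 ≤ p) (hx₀p : -x₀ ≤ p) (hpq : p ≤ q) (hqp : x₀ ≤ qp) :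
    √(lam / π) * Real.exp (-(lam * (q / ε) ^ 2)) * ((q - p) / ε)
      ≤ P.real {ω | Hits qp (ouPath lam x₀ ε (B · ω))} := by
  have := hB.isProbabilityMeasure
  have hlaw := hB.hasLaw (t := 1 / (2 * lam)) (by positivity)
  calc √(lam / π) * Real.exp (-(lam * (q / ε) ^ 2)) * ((q - p) / ε)
      = gaussianPDFReal 0 (1 / (2 * lam)).toNNReal (q / ε) * (q / ε - p / ε) := by
        rw [gaussianPDFReal_zero_one_div_two_mul hlam, sub_div]
    _ ≤ (gaussianReal 0 (1 / (2 * lam)).toNNReal).real (Ioo (p / ε) (q / ε)) :=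
        gaussianPDFReal_mul_sub_le_measureReal_Ioo _ (by positivity) (by gcongr)
    _ = P.real (B (1 / (2 * lam)) ⁻¹' Ioo (p / ε) (q / ε)) := by
        rw [← hlaw.map_eq, map_measureReal_apply (hB.1 _) measurableSet_Ioo]
    _ ≤ P.real {ω | Hits qp (ouPath lam x₀ ε (B · ω))} := by
        refine ENNReal.toReal_mono (measure_ne_top _ _) (measure_mono_ae ?_)
        filter_upwards [hB.2.1] with ω hω hωT
        have hgt : p < ε * B (1 / (2 * lam)) ω := (div_lt_iff₀' hε).1 hωT.1
        exact hits_ouPath hlam hω.2 hω.1 hqp (by linarith)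

lemma measureReal_hits_pos (hB : IsBrownianMotion P B) (hlam : 0 < lam) (hε : 0 < ε)
    (hqp : x₀ ≤ qp) : 0 < P.real {ω | Hits qp (ouPath lam x₀ ε (B · ω))} :=
  lt_of_lt_of_le (by rw [add_sub_cancel_left]; positivity)
    (le_measureReal_hits (q := |x₀| + 1) hB hlam hε (abs_nonneg x₀) (neg_le_abs x₀) (by simp) hqp)

lemma measureReal_symmDiff_hits_exitsAtRight_le (hB : IsBrownianMotion P B) (hlam : 0 < lam)
    (hε : 0 < ε) {p : ℝ} (hp : 0 ≤ p) (hx₀p : -x₀ ≤ p) (hpq : p < q) (hqm : q < -qm)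
    (hqp : 0 < qp) (hx₀ : x₀ ≤ qp) :
    P.real (symmDiff {ω | Hits qp (ouPath lam x₀ ε (B · ω))}
        {ω | ExitsAtRight qm qp (ouPath lam x₀ ε (B · ω))})
      ≤ 2 / (√(lam / π) * (q - p)) * ε * P.real {ω | Hits qp (ouPath lam x₀ ε (B · ω))} := by
  have hgap : 0 < q - p := sub_pos.2 hpq
  rw [symmDiff_of_ge fun ω hω => hω.hits]
  calc P.real ({ω | Hits qp (ouPath lam x₀ ε (B · ω))} \
        {ω | ExitsAtRight qm qp (ouPath lam x₀ ε (B · ω))})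
      ≤ 2 * Real.exp (-(lam * (q / ε) ^ 2)) :=
        measureReal_hits_sdiff_exitsAtRight_le hB hlam hε (hp.trans hpq.le) hqm hqp
    _ = 2 / (√(lam / π) * (q - p)) * ε *
          (√(lam / π) * Real.exp (-(lam * (q / ε) ^ 2)) * ((q - p) / ε)) := by
        have hsqrt : √(lam / π) ≠ 0 := by positivity
        field_simp
    _ ≤ 2 / (√(lam / π) * (q - p)) * ε *
          P.real {ω | Hits qp (ouPath lam x₀ ε (B · ω))} := by
        gcongr
        exact le_measureReal_hits hB hlam hε hp hx₀p hpq.le hx₀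

theorem exit_at_qp_equivalent_to_hitting_qp_general (hB : IsBrownianMotion P B) (hlam : 0 < lam)
    (hqm : qm < 0) (hqp : 0 < qp) (hx₀ : x₀ ∈ Ioo qm qp) :
    AsympEquivalent P (fun ε => {ω | ExitsAtRight qm qp (ouPath lam x₀ ε (B · ω))})
      (fun ε => {ω | Hits qp (ouPath lam x₀ ε (B · ω))}) := by
  have := hB.isProbabilityMeasure
  obtain ⟨q, hpq, hq⟩ : ∃ q, max (-x₀) 0 < q ∧ q < -qm :=
    exists_between (max_lt (neg_lt_neg hx₀.1) (neg_pos.2 hqm))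
  set K := 2 / (√(lam / π) * (q - max (-x₀) 0))
  have hlim : Tendsto (fun ε : ℝ => K * ε) (𝓝[>] 0) (𝓝 0) :=
    ((continuous_const_mul K).tendsto' 0 0 (mul_zero K)).mono_left nhdsWithin_le_nhds
  have hpos : ∀ᶠ ε in 𝓝[>] (0 : ℝ), 0 < ε := self_mem_nhdsWithin
  exact .symm <| asympEquivalent_of_measureReal_symmDiff_le
    (hpos.mono fun ε hε => measureReal_hits_pos hB hlam hε hx₀.2.le) hlim
    (hpos.mono fun ε hε => measureReal_symmDiff_hits_exitsAtRight_le hB hlam hε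
      (le_max_right _ _) (le_max_left _ _) hpq hq hqp hx₀.2.le)

end Probability

/-- Lemma 4: for `λ > 0` and `q₋ < x₀ < 0 < q₊`, the families
`C_ε = {τ_ε < ∞, X_ε(τ_ε) = q₊}` and `E_ε = {∃ t ≥ 0, X_ε(t) = q₊}` are asymptotically
equivalent as `ε → 0⁺`. -/
theorem exit_at_qp_equivalent_to_hitting_qp
    {Ω : Type*} [MeasurableSpace Ω] (P : Measure Ω) [IsProbabilityMeasure P]
    (hPc : P.IsComplete)
    (B : ℝ → Ω → ℝ) (hB : IsBrownianMotion P B)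
    (lam qm x₀ qp : ℝ) (hlam : 0 < lam) (hqm : qm < x₀) (hx₀ : x₀ < 0) (hqp : 0 < qp)
    (X : ℝ → ℝ → Ω → ℝ)
    (hX : ∀ ε t ω, X ε t ω
      = Real.exp (lam * t) * (x₀ + ε * B ((1 - Real.exp (-(2 * lam * t))) / (2 * lam)) ω))
    (τ : ℝ → Ω → ℝ)
    (hτ : ∀ ε ω, τ ε ω = sInf {t | 0 ≤ t ∧ (X ε t ω = qm ∨ X ε t ω = qp)})
    (C E : ℝ → Set Ω)
    (hC : ∀ ε, C ε
      = {ω | {t | 0 ≤ t ∧ (X ε t ω = qm ∨ X ε t ω = qp)}.Nonempty ∧ X ε (τ ε ω) ω = qp})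
    (hE : ∀ ε, E ε = {ω | ∃ t : ℝ, 0 ≤ t ∧ X ε t ω = qp}) :
    AsympEquivalent P C E := by
  rw [funext hC, funext hE, funext₂ hτ, funext₃ hX]
  exact exit_at_qp_equivalent_to_hitting_qp_general hB hlam (hqm.trans hx₀) hqp
    ⟨hqm, hx₀.trans hqp⟩
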